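/- arXiv:2310.15820 — 4 statements merged into one kernel-verified Lean document; each statement's English description precedes it below -/
import Mathlib

section
/- Let 𝔽 be a finite field of odd characteristic, let m ≥ 1 and 0 ≤ i ≤ m be integers, and let δ ∈ GL_m(𝔽) be the diagonal matrix whose first i diagonal entries equal −1 and whose remaining m − i diagonal entries equal 1. Then there exists α ∈ GL_m(𝔽) with δ·α·δ⁻¹ = −α (the entrywise negation of α) if and only if m = 2i. Moreover, when m = 2i, the block matrix w = [[0, Id_i],[Id_i, 0]] ∈ GL_m(𝔽) satisfies δ·w·δ⁻¹ = −w. -/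
/-- Let `𝔽` be a finite field of odd characteristic, let `m ≥ 1` and `0 ≤ i ≤ m` be
integers, and let `δ ∈ GL_m(𝔽)` be the diagonal matrix whose first `i` diagonal entries
equal `−1` and whose remaining `m − i` diagonal entries equal `1`. Then there exists
`α ∈ GL_m(𝔽)` with `δ·α·δ⁻¹ = −α` if and only if `m = 2i`. Moreover, when `m = 2i`,
the block matrix `w = [[0, Id_i],[Id_i, 0]] ∈ GL_m(𝔽)` satisfies `δ·w·δ⁻¹ = −w`. -/
theorem stmt_8 (𝔽 : Type*) [Field 𝔽] [Fintype 𝔽]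
    (p : ℕ) [Fact p.Prime] [CharP 𝔽 p] (hp : Odd p)
    (m i : ℕ) (hm : 1 ≤ m) (him : i ≤ m)
    (δ : Matrix (Fin m) (Fin m) 𝔽)
    (hδ : δ = Matrix.diagonal fun j : Fin m => if (j : ℕ) < i then (-1 : 𝔽) else 1)
    (w : Matrix (Fin m) (Fin m) 𝔽)
    (hw : w = Matrix.of fun a b : Fin m =>
      if (a : ℕ) + i = (b : ℕ) ∨ (b : ℕ) + i = (a : ℕ) then (1 : 𝔽) else 0) :
    ((∃ α : Matrix (Fin m) (Fin m) 𝔽, IsUnit α ∧ δ * α * δ⁻¹ = -α) ↔ m = 2 * i) ∧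
      (m = 2 * i → IsUnit w ∧ δ * w * δ⁻¹ = -w) := by
  have h2 : (2 : 𝔽) ≠ 0 := by
    have hc : ringChar 𝔽 ≠ 2 := by
      rw [ringChar.eq 𝔽 p]
      rintro rfl
      exact absurd hp (by decide)
    exact Ring.two_ne_zero hc
  have hδδ : δ * δ = 1 := by
    rw [hδ, Matrix.diagonal_mul_diagonal, ← Matrix.diagonal_one]
    congr 1
    funext j
    split_ifs <;> simp
  have hinv : δ⁻¹ = δ := Matrix.inv_eq_right_inv hδδ
  have key : m = 2 * i → IsUnit w ∧ δ * w * δ⁻¹ = -w := by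
    intro hmi
    constructor
    · let τ : Fin m → Fin m := fun a =>
        if h : (a : ℕ) < i then ⟨a + i, by omega⟩ else ⟨a - i, by omega⟩
      have hτ : ∀ a b : Fin m, ((a : ℕ) + i = (b : ℕ) ∨ (b : ℕ) + i = (a : ℕ)) ↔ b = τ a := by
        intro a b
        have := a.2
        have := b.2
        simp only [τ]
        split_ifs with h <;> rw [Fin.ext_iff] <;> simp only [] <;> omega
      have hττ : ∀ a, τ (τ a) = a := by
        intro a
        have := (hτ (τ a) a).1 ((hτ a (τ a)).2 rfl).symm
        exact this.symm
      have hww : w * w = 1 := by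
        ext a c
        rw [hw, Matrix.mul_apply, Matrix.one_apply]
        simp only [Matrix.of_apply, hτ]
        rw [Finset.sum_eq_single (τ a)]
        · simp [hττ, eq_comm]
        · intro b _ hb
          simp [hb]
        · simp
      exact IsUnit.of_mul_eq_one w hww
    · rw [hinv, hδ]
      ext a b
      rw [Matrix.mul_diagonal, Matrix.diagonal_mul, Matrix.neg_apply, hw, Matrix.of_apply]
      have := a.2
      have := b.2
      split_ifs <;> first | omega | simp
  refine ⟨⟨?_, fun h => ⟨w, key h⟩⟩, key⟩
  rintro ⟨α, hα, h⟩
  have hz : ∀ a b : Fin m, α a b ≠ 0 → ((b : ℕ) < i ↔ ¬ (a : ℕ) < i) := by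
    intro a b hab
    have he := congrFun (congrFun h a) b
    rw [hinv, hδ, Matrix.mul_diagonal, Matrix.diagonal_mul, Matrix.neg_apply] at he
    by_contra hcon
    apply hab
    have h3 : 2 * α a b = 0 := by
      by_cases ha : (a : ℕ) < i <;> by_cases hb : (b : ℕ) < i <;>
        simp only [ha, hb, if_true, if_false, not_true, not_false_iff, iff_true,
          iff_false] at he hcon <;>
        first | (exact absurd trivial hcon) | linear_combination he
    exact (mul_eq_zero.1 h3).resolve_left h2
  have hdet : α.det ≠ 0 := ((Matrix.isUnit_iff_isUnit_det α).1 hα).ne_zero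
  rw [Matrix.det_apply] at hdet
  obtain ⟨σ, -, hσ⟩ := Finset.exists_ne_zero_of_sum_ne_zero hdet
  have hσ' : ∏ j, α (σ j) j ≠ 0 := fun h0 => hσ (by rw [h0, smul_zero])
  have hs : ∀ j : Fin m, (j : ℕ) < i ↔ ¬ ((σ j : Fin m) : ℕ) < i := fun j =>
    hz _ _ (Finset.prod_ne_zero_iff.1 hσ' j (Finset.mem_univ j))
  have hc : Fintype.card {j : Fin m // (j : ℕ) < i}
      = Fintype.card {j : Fin m // ¬ (j : ℕ) < i} :=
    Fintype.card_congr (σ.subtypeEquiv hs)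
  have hc1 : Fintype.card {j : Fin m // (j : ℕ) < i} = i := by
    rw [Fintype.card_subtype, Fin.card_filter_val_lt]
    omega
  rw [Fintype.card_subtype_compl, hc1, Fintype.card_fin] at hc
  omega
end

section
/- Let F ⊆ E ⊆ K be finite fields of odd characteristic with [K : E] = 2, and set Q = |E|. Let α ∈ Kˣ be such that α ∉ E but α² ∈ E. Then N_{K/F}(α) is a square in F if and only if Q ≡ 3 (mod 4), i.e., if and only if (Q+1)/2 is even. -/
/-- Let `F ⊆ E ⊆ K` be finite fields of odd characteristic with `[K : E] = 2`, and set
`Q = |E|`. Let `α ∈ Kˣ` be such that `α ∉ E` but `α² ∈ E`. Then `N_{K/F}(α)` is a square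
in `F` if and only if `Q ≡ 3 (mod 4)`, i.e., if and only if `(Q+1)/2` is even. -/
theorem stmt_9 (F E K : Type*) [Field F] [Field E] [Field K]
    [Algebra F E] [Algebra E K] [Algebra F K] [IsScalarTower F E K]
    [Fintype F] [Fintype E] [Fintype K]
    (p : ℕ) [Fact p.Prime] [CharP F p] (hp : Odd p)
    (hKE : Module.finrank E K = 2)
    (α : K) (hα : α ∉ Set.range (algebraMap E K)) (hα2 : α ^ 2 ∈ Set.range (algebraMap E K)) :
    (IsSquare (Algebra.norm F α) ↔ Fintype.card E % 4 = 3) ∧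
      (Fintype.card E % 4 = 3 ↔ Even ((Fintype.card E + 1) / 2)) := by
  have hpP : p.Prime := Fact.out
  have hcE : CharP E p := charP_of_injective_algebraMap (algebraMap F E).injective p
  have hcK : CharP K p := charP_of_injective_algebraMap (algebraMap F K).injective p
  have hp2 : p ≠ 2 := by rintro rfl; exact absurd hp (by decide)
  have hrF : ringChar F ≠ 2 := by rwa [ringChar.eq F p]
  have hrE : ringChar E ≠ 2 := by rwa [ringChar.eq E p]
  have hrK : ringChar K ≠ 2 := by rwa [ringChar.eq K p]
  have oF : Fintype.card F % 2 = 1 := FiniteField.odd_card_of_char_ne_two hrF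
  have oE : Fintype.card E % 2 = 1 := FiniteField.odd_card_of_char_ne_two hrE
  refine ⟨?_, by rw [Nat.even_iff]; omega⟩
  have hα0 : α ≠ 0 := by
    rintro rfl
    exact hα ⟨0, map_zero _⟩
  obtain ⟨a, ha⟩ := hα2
  have ha0 : a ≠ 0 := by
    rintro rfl
    rw [map_zero] at ha
    exact hα0 (pow_eq_zero_iff (two_ne_zero) |>.1 ha.symm)
  have hns : ¬ IsSquare a := by
    rintro ⟨b, rfl⟩
    have h : α ^ 2 = (algebraMap E K b) ^ 2 := by rw [← ha, map_mul, sq]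
    rcases sq_eq_sq_iff_eq_or_eq_neg.1 h with h | h
    · exact hα ⟨b, h.symm⟩
    · exact hα ⟨-b, by rw [map_neg, h]⟩
  have hchi : a ^ (Fintype.card E / 2) = -1 := by
    rcases FiniteField.pow_dichotomy hrE ha0 with h | h
    · exact absurd ((FiniteField.isSquare_iff hrE ha0).2 h) hns
    · exact h
  have hcard : Fintype.card K = Fintype.card E ^ 2 := by
    rw [← hKE]; exact Module.card_eq_pow_finrank
  have hβ0 : Algebra.norm F α ≠ 0 := Algebra.norm_ne_zero_iff.2 hα0
  rw [FiniteField.isSquare_iff hrF hβ0, ← (algebraMap F K).injective.eq_iff, map_pow, map_one,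
    FiniteField.algebraMap_norm_eq_pow, ← pow_mul]
  simp only [Nat.card_eq_fintype_card]
  have hdvd : (Fintype.card F - 1) ∣ (Fintype.card K - 1) := by
    rw [Module.card_eq_pow_finrank (K := F) (V := K)]
    simpa using Nat.sub_dvd_pow_sub_pow (Fintype.card F) 1 (Module.finrank F K)
  have hF1 : 1 < Fintype.card F := Fintype.one_lt_card
  obtain ⟨M, hM⟩ := hdvd
  obtain ⟨f, hf⟩ : ∃ f, Fintype.card F = 2 * f + 1 := ⟨Fintype.card F / 2, by omega⟩
  obtain ⟨e, he⟩ : ∃ e, Fintype.card E = 2 * e + 1 := ⟨Fintype.card E / 2, by omega⟩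
  have hexp : (Fintype.card K - 1) / (Fintype.card F - 1) * (Fintype.card F / 2)
      = 2 * (e * (e + 1)) := by
    rw [hM, Nat.mul_div_cancel_left _ (by omega)]
    have h1 : Fintype.card K - 1 = 2 * (2 * (e * (e + 1))) := by
      rw [hcard, he]
      apply Nat.sub_eq_of_eq_add
      ring
    have h2 : Fintype.card F / 2 = f := by omega
    have h3 : Fintype.card F - 1 = 2 * f := by omega
    rw [h1, h3] at hM
    rw [h2]
    linarith
  have hE2 : Fintype.card E / 2 = e := by omega
  rw [hE2] at hchi
  rw [hexp, pow_mul, ← ha, ← map_pow, pow_mul, hchi, ← map_one (algebraMap E K),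
    (algebraMap E K).injective.eq_iff]
  have hneg : (-1 : E) ≠ 1 := Ring.neg_one_ne_one_of_char_ne_two hrE
  rw [neg_one_pow_eq_one_iff_even hneg, Nat.even_iff]
  omega
end

section
/- Let F ⊆ K be finite fields with |F| = q and [K : F] = f, and let φ : K → K denote the q-power Frobenius x ↦ x^q, which generates the cyclic Galois group Gal(K/F) of order f. Let A be an abelian group and ξ : Kˣ → A a group homomorphism, of finite order d in the group of homomorphisms from Kˣ to A. Then: (a) for every integer i ≥ 0, ξ ∘ φ^i = ξ if and only if d divides q^i − 1; (b) ξ ∘ σ ≠ ξ for every nontrivial σ ∈ Gal(K/F) if and only if the multiplicative order of q modulo d equals f. -/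
/-- Let `F ⊆ K` be finite fields with `|F| = q` and `[K : F] = f`, and let
`φ : K → K` denote the `q`-power Frobenius `x ↦ x^q` (which generates the cyclic Galois
group `Gal(K/F)` of order `f`). Let `A` be an abelian group and `ξ : Kˣ → A` a group
homomorphism, of finite order `d` in the group of homomorphisms from `Kˣ` to `A`. Then:
(a) for every integer `i ≥ 0`, `ξ ∘ φ^i = ξ` if and only if `d` divides `q^i − 1`;
(b) `ξ ∘ σ ≠ ξ` for every nontrivial `σ ∈ Gal(K/F)` if and only if the multiplicative
order of `q` modulo `d` equals `f`. -/
theorem stmt_10 (F K : Type*) [Field F] [Field K] [Algebra F K] [Fintype F] [Fintype K]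
    (q f : ℕ) (hq : Fintype.card F = q) (hf : Module.finrank F K = f)
    (A : Type*) [CommGroup A] (ξ : Kˣ →* A) (d : ℕ) (hd0 : 0 < d) (hd : orderOf ξ = d) :
    (∀ i : ℕ, (∀ x : Kˣ, ξ (x ^ q ^ i) = ξ x) ↔ d ∣ q ^ i - 1) ∧
    ((∀ σ : K ≃ₐ[F] K, σ ≠ AlgEquiv.refl →
        ∃ x : Kˣ, ξ (Units.map σ.toAlgHom.toRingHom.toMonoidHom x) ≠ ξ x) ↔
      orderOf (q : ZMod d) = f) := by
  subst hq hf
  have ha : ∀ i : ℕ, (∀ x : Kˣ, ξ (x ^ Fintype.card F ^ i) = ξ x) ↔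
      d ∣ Fintype.card F ^ i - 1 := by
    intro i
    have h1 : 1 ≤ Fintype.card F ^ i := Nat.one_le_pow _ _ Fintype.card_pos
    rw [← hd, orderOf_dvd_iff_pow_eq_one, MonoidHom.ext_iff]
    refine forall_congr' fun x => ?_
    rw [MonoidHom.pow_apply, MonoidHom.one_apply, map_pow]
    nth_rewrite 1 [← Nat.sub_add_cancel h1]
    rw [pow_succ, mul_eq_right]
  have hz : ∀ i : ℕ, ((Fintype.card F : ZMod d) ^ i = 1) ↔
      ∀ x : Kˣ, ξ (x ^ Fintype.card F ^ i) = ξ x := by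
    intro i
    have h1 : 1 ≤ Fintype.card F ^ i := Nat.one_le_pow _ _ Fintype.card_pos
    rw [ha, ← ZMod.natCast_eq_zero_iff, Nat.cast_sub h1, sub_eq_zero]
    push_cast
    rfl
  have hs : ∀ (i : ℕ) (x : Kˣ), Units.map
      (FiniteField.frobeniusAlgEquivOfAlgebraic F K ^ i).toAlgHom.toRingHom.toMonoidHom x
      = x ^ Fintype.card F ^ i := by
    intro i x
    ext
    change (FiniteField.frobeniusAlgEquivOfAlgebraic F K ^ i) (x : K) = _
    rw [AlgEquiv.coe_pow, FiniteField.coe_frobeniusAlgEquivOfAlgebraic_iterate]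
    simp
  have hord := FiniteField.orderOf_frobeniusAlgEquivOfAlgebraic F K
  have hpos : 0 < Module.finrank F K := Module.finrank_pos
  refine ⟨ha, ?_⟩
  rw [orderOf_eq_iff hpos]
  constructor
  · intro h
    refine ⟨?_, ?_⟩
    · rw [hz]
      intro x
      rw [← hs, ← hord, pow_orderOf_eq_one]
      rfl
    · intro m hm hm0 hc
      rw [hz] at hc
      obtain ⟨x, hx⟩ := h (FiniteField.frobeniusAlgEquivOfAlgebraic F K ^ m) (by
        intro h1
        exact pow_ne_one_of_lt_orderOf hm0.ne' (by rw [hord]; exact hm) h1)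
      exact hx (by rw [hs]; exact hc x)
  · rintro ⟨-, h⟩ σ hσ
    obtain ⟨⟨i, hi⟩, rfl⟩ := (FiniteField.bijective_frobeniusAlgEquivOfAlgebraic_pow F K).2 σ
    have hi0 : 0 < i := by
      rcases Nat.eq_zero_or_pos i with rfl | h0
      · exact absurd (pow_zero _) hσ
      · exact h0
    have := h i hi hi0
    rw [Ne, hz] at this
    push Not at this
    obtain ⟨x, hx⟩ := this
    exact ⟨x, by rw [hs]; exact hx⟩
end

section
/- Let F ⊆ E ⊆ K be finite fields with |F| = q, [E : F] = t and [K : E] = 2, and set f = 2t, so that [K : F] = f. Let ℓ be a prime not dividing q and let 𝔽̄_ℓ be an algebraic closure of the field with ℓ elements. Then there exists a group homomorphism ξ : Kˣ → 𝔽̄_ℓˣ which is trivial on Eˣ and satisfies ξ ∘ σ ≠ ξ for every nontrivial σ ∈ Gal(K/F), if and only if there exists a positive integer A coprime to ℓ such that A divides q^t + 1 and the multiplicative order of q modulo A equals f. -/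
/-- Let `F ⊆ E ⊆ K` be finite fields with `|F| = q`, `[E : F] = t` and `[K : E] = 2`, and
set `f = 2t`, so that `[K : F] = f`. Let `ℓ` be a prime not dividing `q` and let `Ω` be an
algebraic closure of the field with `ℓ` elements. Then there exists a group homomorphism
`ξ : Kˣ → Ωˣ` which is trivial on `Eˣ` and satisfies `ξ ∘ σ ≠ ξ` for every nontrivial
`σ ∈ Gal(K/F)`, if and only if there exists a positive integer `A` coprime to `ℓ` such that
`A` divides `q^t + 1` and the multiplicative order of `q` modulo `A` equals `f`. -/
theorem stmt_11 (F E K : Type*) [Field F] [Field E] [Field K]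
    [Algebra F E] [Algebra E K] [Algebra F K] [IsScalarTower F E K]
    [Fintype F] [Fintype E] [Fintype K]
    (q t f : ℕ) (hq : Fintype.card F = q)
    (ht : Module.finrank F E = t) (hKE : Module.finrank E K = 2) (hf : f = 2 * t)
    (ℓ : ℕ) [Fact ℓ.Prime] (hℓq : ¬ ℓ ∣ q)
    (Ω : Type*) [Field Ω] [Algebra (ZMod ℓ) Ω] [IsAlgClosure (ZMod ℓ) Ω] :
    (∃ ξ : Kˣ →* Ωˣ,
        (∀ x : Kˣ, (x : K) ∈ Set.range (algebraMap E K) → ξ x = 1) ∧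
        (∀ σ : K ≃ₐ[F] K, σ ≠ AlgEquiv.refl →
          ∃ x : Kˣ, ξ (Units.map σ.toAlgHom.toRingHom.toMonoidHom x) ≠ ξ x)) ↔
    (∃ A : ℕ, 0 < A ∧ A.Coprime ℓ ∧ A ∣ q ^ t + 1 ∧ orderOf (q : ZMod A) = f) := by
  classical
  have ht0 : 0 < t := by
    rw [← ht]
    haveI : Module.Finite F E := Module.Finite.of_finite
    exact Module.finrank_pos
  have hcE : Fintype.card E = q ^ t := by
    rw [Module.card_eq_pow_finrank (K := F), hq, ht]
  have hcK : Fintype.card K = (q ^ t) ^ 2 := by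
    rw [Module.card_eq_pow_finrank (K := E), hcE, hKE]
  haveI : Module.Finite F K := Module.Finite.of_finite
  have hFK : Module.finrank F K = f := by
    rw [← Module.finrank_mul_finrank F E K, ht, hKE, hf, mul_comm]
  have hq1 : 1 < q := hq ▸ Fintype.one_lt_card
  have hqt1 : 1 < q ^ t := Nat.one_lt_pow ht0.ne' hq1
  obtain ⟨g, hg⟩ := IsCyclic.exists_monoid_generator (α := Kˣ)
  have hg' : ∀ x, x ∈ Subgroup.zpowers g := fun x => mem_powers_iff_mem_zpowers.mp (hg x)
  have hog : orderOf g = (q ^ t - 1) * (q ^ t + 1) := by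
    rw [orderOf_eq_card_of_forall_mem_zpowers hg', Nat.card_eq_fintype_card, Fintype.card_units,
      hcK, mul_comm, ← Nat.sq_sub_sq, one_pow]
  -- Frobenius powers
  set φ : K ≃ₐ[F] K := FiniteField.frobeniusAlgEquivOfAlgebraic F K with hφ
  have hφo : orderOf φ = f := by
    rw [hφ, FiniteField.orderOf_frobeniusAlgEquivOfAlgebraic, hFK]
  have hφm : ∀ (m : ℕ) (x : Kˣ),
      Units.map (φ ^ m).toAlgHom.toRingHom.toMonoidHom x = x ^ (q ^ m) := by
    intro m x
    ext
    have h1 : (φ ^ m) (x : K) = (x : K) ^ (q ^ m) := by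
      rw [AlgEquiv.coe_pow, hφ, FiniteField.coe_frobeniusAlgEquivOfAlgebraic_iterate, hq]
    simpa using! h1
  haveI : CharP Ω ℓ := charP_of_injective_algebraMap (algebraMap (ZMod ℓ) Ω).injective ℓ
  have hmod : ∀ (z : Ωˣ) (m : ℕ), z ^ (q ^ m) = z ↔ (q : ZMod (orderOf z)) ^ m = 1 := by
    intro z m
    have h1 : z ^ (q ^ m) = z ^ 1 ↔ q ^ m ≡ 1 [MOD orderOf z] := pow_eq_pow_iff_modEq
    rw [pow_one] at h1
    rw [h1, ← ZMod.natCast_eq_natCast_iff]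
    push_cast
    rfl
  constructor
  · rintro ⟨ξ, h1, h2⟩
    have hz : ξ g ^ (q ^ t + 1) = 1 := by
      rw [← map_pow]
      apply h1
      refine ⟨Algebra.norm E (g : K), ?_⟩
      rw [FiniteField.algebraMap_norm_eq_pow_sum, hKE, Nat.card_eq_fintype_card, hcE]
      simp [Finset.sum_range_succ, add_comm]
    have hpos : 0 < orderOf (ξ g) := orderOf_pos_iff.mpr
      (isOfFinOrder_iff_pow_eq_one.mpr ⟨_, Nat.succ_pos _, hz⟩)
    have hdvd := orderOf_dvd_of_pow_eq_one hz
    have hℓ : Nat.Prime ℓ := Fact.out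
    refine ⟨orderOf (ξ g), hpos, ?_, hdvd, ?_⟩
    · refine Nat.Coprime.symm ((Nat.Prime.coprime_iff_not_dvd hℓ).mpr ?_)
      rintro ⟨b, hb⟩
      have hb0 : 0 < b := by
        rcases Nat.eq_zero_or_pos b with h | h
        · rw [h] at hb; omega
        · exact h
      have h3 : ((ξ g : Ω) ^ b) ^ ℓ = 1 := by
        rw [← pow_mul, mul_comm b, ← hb, ← Units.val_pow_eq_pow_val, pow_orderOf_eq_one]; rfl
      have h4 : (ξ g : Ω) ^ b = 1 := by
        apply frobenius_inj Ω ℓ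
        simp [frobenius_def, h3]
      have h5 : ξ g ^ b = 1 := by ext; simpa using h4
      have h6 := Nat.le_of_dvd hb0 (orderOf_dvd_of_pow_eq_one h5)
      rw [hb] at h6
      have := hℓ.two_le
      nlinarith
    · have hd : orderOf (q : ZMod (orderOf (ξ g))) ∣ f := by
        apply orderOf_dvd_of_pow_eq_one
        have h3 : (q : ZMod (orderOf (ξ g))) ^ t + 1 = 0 := by
          have := (ZMod.natCast_eq_zero_iff (q ^ t + 1) (orderOf (ξ g))).mpr hdvd
          simpa using this
        rw [hf, mul_comm, pow_mul, eq_neg_of_add_eq_zero_left h3]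
        simp
      refine Nat.dvd_antisymm hd ?_
      by_contra hnd
      set m := orderOf (q : ZMod (orderOf (ξ g))) with hm
      have hne : φ ^ m ≠ 1 := fun h => hnd (hφo ▸ orderOf_dvd_of_pow_eq_one h)
      obtain ⟨x, hx⟩ := h2 (φ ^ m) hne
      apply hx
      rw [hφm]
      obtain ⟨k, rfl⟩ := hg x
      have h7 : ξ g ^ (q ^ m) = ξ g := (hmod _ _).mpr (pow_orderOf_eq_one _)
      simp only [map_pow]
      rw [← pow_mul, mul_comm, pow_mul, h7]
  · rintro ⟨A, hA0, hAℓ, hAd, hAo⟩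
    have hAne : (A : Ω) ≠ 0 := by
      intro h
      have h1 := (CharP.cast_eq_zero_iff Ω ℓ A).mp h
      exact (Nat.Prime.coprime_iff_not_dvd Fact.out).mp hAℓ.symm h1
    haveI : NeZero (A : Ω) := ⟨hAne⟩
    haveI : IsAlgClosed Ω := IsAlgClosure.isAlgClosed (ZMod ℓ)
    obtain ⟨ζ, hζ⟩ := HasEnoughRootsOfUnity.exists_primitiveRoot Ω A
    obtain ⟨z, rfl⟩ := hζ.isUnit hA0.ne'
    have hzA : orderOf z = A := by
      rw [← orderOf_units]; exact hζ.eq_orderOf.symm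
    have hdv : orderOf z ∣ orderOf g := by
      rw [hzA, hog]; exact hAd.mul_left _
    refine ⟨monoidHomOfForallMemZpowers hg' hdv, ?_, ?_⟩
    · rintro x ⟨e, he⟩
      obtain ⟨k, rfl⟩ := hg x
      simp only [map_pow, monoidHomOfForallMemZpowers_apply_gen]
      have he0 : e ≠ 0 := by
        rintro rfl
        rw [map_zero] at he
        exact Units.ne_zero _ he.symm
      have h1 : (g ^ k) ^ (q ^ t - 1) = 1 := by
        ext
        have h2 := FiniteField.pow_card_sub_one_eq_one e he0
        rw [hcE] at h2
        rw [Units.val_pow_eq_pow_val]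
        change ((g ^ k : Kˣ) : K) ^ _ = _
        have he' : algebraMap E K e = ((g ^ k : Kˣ) : K) := he
        rw [← he', ← map_pow, h2]; simp
      rw [← pow_mul] at h1
      have h3 := orderOf_dvd_of_pow_eq_one h1
      rw [hog, mul_comm k] at h3
      have h4 := Nat.dvd_of_mul_dvd_mul_left (by omega) h3
      exact orderOf_dvd_iff_pow_eq_one.mp (hzA ▸ hAd.trans h4)
    · intro σ hσ
      obtain ⟨n, hn⟩ := (FiniteField.bijective_frobeniusAlgEquivOfAlgebraic_pow F K).2 σ
      have hn' : φ ^ (n : ℕ) = σ := hn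
      refine ⟨g, ?_⟩
      rw [← hn', hφm, map_pow, monoidHomOfForallMemZpowers_apply_gen]
      intro h
      have h1 := (hmod _ _).mp h
      rw [hzA] at h1
      have h2 := orderOf_dvd_of_pow_eq_one h1
      rw [hAo, ← hφo] at h2
      apply hσ
      rw [← hn']
      exact orderOf_dvd_iff_pow_eq_one.mp h2
end
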